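/- arXiv:2311.07266 — 2 statements merged into one kernel-verified Lean document; each statement's English description precedes it below -/
import Mathlib

section
/- Let (Ω, μ) be a probability space and let U₁, U₂, U₃, D₁, D₂, D₃ : Ω → Bool be measurable random variables (true encoding outcome +1). Let ε ≥ 0 and suppose μ{ω | D₁ ω = true ∧ U₂ ω = true} ≤ ε, μ{ω | D₂ ω = true ∧ U₃ ω = true} ≤ ε, μ{ω | U₁ ω = true ∧ D₃ ω = true} ≤ ε, and μ{ω | D₁ ω = false ∧ D₂ ω = false ∧ D₃ ω = false} ≤ ε. Then μ{ω | U₁ ω = true ∧ U₂ ω = true ∧ U₃ ω = true} ≤ 4ε. -/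
open MeasureTheory

open scoped ENNReal

section

variable {Ω ι κ : Type*}

theorem iInter_subset_iUnion_inter_union_iInter_compl (U : κ → Set Ω) (D : ι → Set Ω)
    (σ : ι → κ) : ⋂ j, U j ⊆ (⋃ i, D i ∩ U (σ i)) ∪ ⋂ i, (D i)ᶜ := by
  intro ω hU
  by_cases hD : ∃ i, ω ∈ D i
  · obtain ⟨i, hi⟩ := hD
    exact .inl (Set.mem_iUnion_of_mem i ⟨hi, Set.mem_iInter.mp hU (σ i)⟩)
  · exact .inr (Set.mem_iInter.mpr (not_exists.mp hD))

variable {F : Type*} [FunLike F (Set Ω) ℝ≥0∞] [OuterMeasureClass F Ω] [Fintype ι]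

theorem measure_iInter_le_sum_inter_add_iInter_compl (μ : F) (U : κ → Set Ω) (D : ι → Set Ω)
    (σ : ι → κ) : μ (⋂ j, U j) ≤ ∑ i, μ (D i ∩ U (σ i)) + μ (⋂ i, (D i)ᶜ) :=
  calc
    μ (⋂ j, U j) ≤ μ ((⋃ i, D i ∩ U (σ i)) ∪ ⋂ i, (D i)ᶜ) :=
      measure_mono (iInter_subset_iUnion_inter_union_iInter_compl U D σ)
    _ ≤ μ (⋃ i, D i ∩ U (σ i)) + μ (⋂ i, (D i)ᶜ) := measure_union_le _ _
    _ ≤ ∑ i, μ (D i ∩ U (σ i)) + μ (⋂ i, (D i)ᶜ) := by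
      gcongr
      exact measure_iUnion_fintype_le μ _

theorem hardy_tripartite_noisy_local_bound_general (μ : F) (U : κ → Set Ω) (D : ι → Set Ω)
    (σ : ι → κ) {ε : ℝ≥0∞} (hDU : ∀ i, μ (D i ∩ U (σ i)) ≤ ε) (hD : μ (⋂ i, (D i)ᶜ) ≤ ε) :
    μ (⋂ j, U j) ≤ (Fintype.card ι + 1) * ε :=
  calc
    μ (⋂ j, U j) ≤ ∑ i, μ (D i ∩ U (σ i)) + μ (⋂ i, (D i)ᶜ) :=
      measure_iInter_le_sum_inter_add_iInter_compl μ U D σ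
    _ ≤ Fintype.card ι • ε + ε := add_le_add (Finset.sum_le_card_nsmul _ _ _ fun i _ ↦ hDU i) hD
    _ = (Fintype.card ι + 1) * ε := by rw [nsmul_eq_mul, add_one_mul]

end

/-- **Local bound for the noise-tolerant tripartite Hardy test.**
In a local hidden-variable model on a probability space `(Ω, μ)` with
measurable `Bool`-valued random variables `U₁, U₂, U₃, D₁, D₂, D₃`
(`true` encoding outcome `+1`), if the four Hardy "zero" probabilities are
each at most `ε ≥ 0`, then `P(+1,+1,+1 | U₁,U₂,U₃) ≤ 4ε`. -/
theorem hardy_tripartite_noisy_local_bound {Ω : Type*} [MeasurableSpace Ω]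
    (μ : Measure Ω) [IsProbabilityMeasure μ]
    (U₁ U₂ U₃ D₁ D₂ D₃ : Ω → Bool)
    (hU₁ : Measurable U₁) (hU₂ : Measurable U₂) (hU₃ : Measurable U₃)
    (hD₁ : Measurable D₁) (hD₂ : Measurable D₂) (hD₃ : Measurable D₃)
    (ε : ℝ) (hε : 0 ≤ ε)
    (h₁ : μ {ω | D₁ ω = true ∧ U₂ ω = true} ≤ ENNReal.ofReal ε)
    (h₂ : μ {ω | D₂ ω = true ∧ U₃ ω = true} ≤ ENNReal.ofReal ε)
    (h₃ : μ {ω | U₁ ω = true ∧ D₃ ω = true} ≤ ENNReal.ofReal ε)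
    (h₄ : μ {ω | D₁ ω = false ∧ D₂ ω = false ∧ D₃ ω = false} ≤ ENNReal.ofReal ε) :
    μ {ω | U₁ ω = true ∧ U₂ ω = true ∧ U₃ ω = true} ≤ ENNReal.ofReal (4 * ε) := by
  simp only [and_comm (a := U₁ _ = true)] at h₃
  simpa [Fin.forall_fin_succ, Set.iInter_ofPred, ← Set.ofPred_and, Set.compl_ofPred,
    ENNReal.ofReal_mul, three_add_one_eq_four, h₁, h₂, h₃, h₄] using
    hardy_tripartite_noisy_local_bound_general μ (fun j ↦ {ω | ![U₁, U₂, U₃] j ω = true})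
      (fun i ↦ {ω | ![D₁, D₂, D₃] i ω = true}) ![1, 2, 0] (ε := ENNReal.ofReal ε)
end

section
/- Let n ≥ 2 and let t be the unique real number in (0,1) with ∑_{k=1}^{n} t^k = 1. For all t₁, …, tₙ ∈ (0,1), one has (∏_{i=1}^{n} t_i (1 − t_i)) / (1 − ∏_{i=1}^{n} t_i) ≤ t^n (1−t)^n / (1 − t^n), with equality if and only if t_i = t for every i. Consequently the maximum probability of success of the generalized n-partite Hardy argument over all n-qubit strategies is p_max = t^n (1−t)^n / (1 − t^n), attained exactly when all local measurement parameters |α_i|² are equal to t. -/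
/-!
Let `G` and `H` be the geometric means of the `tᵢ` and of the `1 - tᵢ`. Two applications of AM-GM,
`G ≤ A` and `H ≤ 1 - A` with `A` the arithmetic mean of the `tᵢ`, give `H ≤ 1 - G`. The success
probability `Gⁿ Hⁿ / (1 - Gⁿ)` is therefore at most its value when all parameters equal `G`, and the
equality case of AM-GM makes all `tᵢ` equal. On the diagonal, the derivative of
`sⁿ (1 - s)ⁿ / (1 - sⁿ)` is a positive multiple of `1 - 2 s + sⁿ⁺¹ = (1 - s) (1 - (s + ⋯ + sⁿ))`,
which changes sign from positive to negative exactly at `t`.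
-/

open Finset Set

section GeometricMean

variable {ι : Type*} [Fintype ι]

/-- The geometric mean of a finite family of nonnegative reals, written as the product of the
`card ι`-th roots to match the weighted means of Mathlib. -/
noncomputable def geomMean (x : ι → ℝ) : ℝ :=
  ∏ i, x i ^ (Fintype.card ι : ℝ)⁻¹

theorem geomMean_nonneg {x : ι → ℝ} (hx : ∀ i, 0 ≤ x i) : 0 ≤ geomMean x :=
  prod_nonneg fun i _ => Real.rpow_nonneg (hx i) _

theorem geomMean_pow_card {x : ι → ℝ} (hx : ∀ i, 0 ≤ x i) :
    geomMean x ^ Fintype.card ι = ∏ i, x i := by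
  rw [geomMean, ← Finset.prod_pow]
  refine prod_congr rfl fun i _ => Real.rpow_inv_natCast_pow (hx i) ?_
  exact (Fintype.card_pos_iff.2 ⟨i⟩).ne'

variable [Nonempty ι]

theorem geomMean_mem_Ioo {x : ι → ℝ} (hx : ∀ i, x i ∈ Ioo (0 : ℝ) 1) :
    geomMean x ∈ Ioo (0 : ℝ) 1 := by
  have root_mem (i : ι) : x i ^ (Fintype.card ι : ℝ)⁻¹ ∈ Ioo (0 : ℝ) 1 :=
    ⟨Real.rpow_pos_of_pos (hx i).1 _, Real.rpow_lt_one (hx i).1.le (hx i).2 (by positivity)⟩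
  refine ⟨prod_pos fun i _ => (root_mem i).1, ?_⟩
  calc geomMean x < ∏ _i : ι, (1 : ℝ) :=
        prod_lt_prod_of_nonempty (fun i _ => (root_mem i).1) (fun i _ => (root_mem i).2)
          univ_nonempty
    _ = 1 := prod_const_one

theorem geomMean_pow_card_lt_one {x : ι → ℝ} (hx : ∀ i, x i ∈ Ioo (0 : ℝ) 1) :
    geomMean x ^ Fintype.card ι < 1 :=
  pow_lt_one₀ (geomMean_mem_Ioo hx).1.le (geomMean_mem_Ioo hx).2 Fintype.card_ne_zero

theorem geomMean_le_arithMean {x : ι → ℝ} (hx : ∀ i, 0 ≤ x i) :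
    geomMean x ≤ ∑ i, (Fintype.card ι : ℝ)⁻¹ * x i :=
  Real.geom_mean_le_arith_mean_weighted _ _ _ (fun _ _ => by positivity) (by simp)
    fun i _ => hx i

theorem eq_geomMean_of_geomMean_eq_arithMean {x : ι → ℝ} (hx : ∀ i, 0 ≤ x i)
    (h : geomMean x = ∑ i, (Fintype.card ι : ℝ)⁻¹ * x i) (i : ι) : x i = geomMean x := by
  rw [h]
  exact (Real.geom_mean_eq_arith_mean_weighted_iff_of_pos' _ _ _ (fun _ _ => by positivity)
    (by simp) fun i _ => hx i).1 h i (mem_univ i)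

theorem geomMean_one_sub_le_one_sub_arithMean {x : ι → ℝ} (hx : ∀ i, x i ≤ 1) :
    geomMean (fun i => 1 - x i) ≤ 1 - ∑ i, (Fintype.card ι : ℝ)⁻¹ * x i := by
  calc geomMean (fun i => 1 - x i) ≤ ∑ i, (Fintype.card ι : ℝ)⁻¹ * (1 - x i) :=
        geomMean_le_arithMean fun i => sub_nonneg.2 (hx i)
    _ = 1 - ∑ i, (Fintype.card ι : ℝ)⁻¹ * x i := by
        simp [mul_sub]

theorem geomMean_one_sub_le {x : ι → ℝ} (hx : ∀ i, x i ∈ Icc (0 : ℝ) 1) :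
    geomMean (fun i => 1 - x i) ≤ 1 - geomMean x := by
  linarith [geomMean_one_sub_le_one_sub_arithMean fun i => (hx i).2,
    geomMean_le_arithMean fun i => (hx i).1]

theorem eq_geomMean_of_geomMean_one_sub_eq {x : ι → ℝ} (hx : ∀ i, x i ∈ Icc (0 : ℝ) 1)
    (h : geomMean (fun i => 1 - x i) = 1 - geomMean x) (i : ι) : x i = geomMean x := by
  refine eq_geomMean_of_geomMean_eq_arithMean (fun i => (hx i).1)
    ((geomMean_le_arithMean fun i => (hx i).1).antisymm ?_) i
  linarith [geomMean_one_sub_le_one_sub_arithMean fun i => (hx i).2]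

end GeometricMean

/-- The success probability of the generalized Hardy argument with local measurement parameters
`|αᵢ|² = x i`. -/
noncomputable def hardyProbability {ι : Type*} [Fintype ι] (x : ι → ℝ) : ℝ :=
  (∏ i, x i * (1 - x i)) / (1 - ∏ i, x i)

/-- The success probability of the `n`-partite Hardy argument when all local measurement parameters
equal `s`. -/
noncomputable def symmetricHardyProbability (n : ℕ) (s : ℝ) : ℝ :=
  s ^ n * (1 - s) ^ n / (1 - s ^ n)

section Symmetrization

variable {ι : Type*} [Fintype ι]

theorem hardyProbability_const (s : ℝ) :
    hardyProbability (fun _ : ι => s) = symmetricHardyProbability (Fintype.card ι) s := by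
  simp [hardyProbability, symmetricHardyProbability, mul_pow]

variable {x : ι → ℝ}

theorem hardyProbability_eq_geomMean (hx : ∀ i, x i ∈ Icc (0 : ℝ) 1) :
    hardyProbability x =
      geomMean x ^ Fintype.card ι * geomMean (fun i => 1 - x i) ^ Fintype.card ι /
        (1 - geomMean x ^ Fintype.card ι) := by
  rw [hardyProbability, prod_mul_distrib, geomMean_pow_card fun i => (hx i).1,
    geomMean_pow_card fun i => sub_nonneg.2 (hx i).2]

variable [Nonempty ι]

theorem hardyProbability_le_symmetric_geomMean (hx : ∀ i, x i ∈ Ioo (0 : ℝ) 1) :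
    hardyProbability x ≤ symmetricHardyProbability (Fintype.card ι) (geomMean x) := by
  have hx_Icc (i : ι) : x i ∈ Icc (0 : ℝ) 1 := Ioo_subset_Icc_self (hx i)
  have geomMean_pos := (geomMean_mem_Ioo hx).1
  have denom_pos := sub_pos.2 (geomMean_pow_card_lt_one hx)
  rw [hardyProbability_eq_geomMean hx_Icc, symmetricHardyProbability]
  gcongr
  · exact geomMean_nonneg fun i => sub_nonneg.2 (hx_Icc i).2
  · exact geomMean_one_sub_le hx_Icc

theorem eq_geomMean_of_hardyProbability_eq (hx : ∀ i, x i ∈ Ioo (0 : ℝ) 1)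
    (h : hardyProbability x = symmetricHardyProbability (Fintype.card ι) (geomMean x)) (i : ι) :
    x i = geomMean x := by
  have hx_Icc (i : ι) : x i ∈ Icc (0 : ℝ) 1 := Ioo_subset_Icc_self (hx i)
  obtain ⟨geomMean_pos, geomMean_lt_one⟩ := geomMean_mem_Ioo hx
  have denom_pos := sub_pos.2 (geomMean_pow_card_lt_one hx)
  rw [hardyProbability_eq_geomMean hx_Icc, symmetricHardyProbability,
    div_left_inj' denom_pos.ne', mul_right_inj' (pow_pos geomMean_pos _).ne',
    pow_left_inj₀ (geomMean_nonneg fun i => sub_nonneg.2 (hx_Icc i).2)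
      (sub_pos.2 geomMean_lt_one).le Fintype.card_ne_zero] at h
  exact eq_geomMean_of_geomMean_one_sub_eq hx_Icc h i

end Symmetrization

section Diagonal

variable {n : ℕ}

theorem strictMonoOn_sum_Icc_one_pow (hn : n ≠ 0) :
    StrictMonoOn (fun s : ℝ => ∑ k ∈ Finset.Icc 1 n, s ^ k) (Ici 0) := by
  intro a ha b _ hab
  refine sum_lt_sum_of_nonempty (Finset.nonempty_Icc.2 (Nat.one_le_iff_ne_zero.2 hn)) ?_
  intro k hk
  exact pow_lt_pow_left₀ hab ha (Nat.one_le_iff_ne_zero.1 (Finset.mem_Icc.1 hk).1)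

theorem one_sub_mul_one_sub_sum_Icc_one_pow {R : Type*} [CommRing R] (n : ℕ) (s : R) :
    (1 - s) * (1 - ∑ k ∈ Finset.Icc 1 n, s ^ k) = 1 - 2 * s + s ^ (n + 1) := by
  induction n with
  | zero =>
    rw [Finset.Icc_eq_empty_of_lt zero_lt_one, sum_empty]
    ring
  | succ n ih =>
    rw [sum_Icc_succ_top n.succ_pos, ← sub_sub, mul_sub, ih]
    ring

theorem hasDerivAt_symmetricHardyProbability {s : ℝ} (hs : s ^ n ≠ 1) :
    HasDerivAt (symmetricHardyProbability n)
      (n * s ^ (n - 1) * (1 - s) ^ n * (1 - ∑ k ∈ Finset.Icc 1 n, s ^ k) / (1 - s ^ n) ^ 2) s := by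
  obtain ⟨m, rfl⟩ : ∃ m, n = m + 1 :=
    Nat.exists_eq_succ_of_ne_zero fun h => hs (by rw [h, pow_zero])
  have hden : 1 - s ^ (m + 1) ≠ 0 := sub_ne_zero.2 hs.symm
  have hderiv := (((hasDerivAt_id s).pow (m + 1)).mul
    (((hasDerivAt_id s).const_sub 1).pow (m + 1))).div
    (((hasDerivAt_id s).pow (m + 1)).const_sub 1) hden
  refine hderiv.congr_deriv ?_
  congr 1
  have hfactor := one_sub_mul_one_sub_sum_Icc_one_pow (m + 1) s
  simp only [Nat.cast_add, Nat.cast_one, id_eq, add_tsub_cancel_right, mul_one, Pi.pow_apply,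
    mul_neg, Pi.mul_apply, sub_neg_eq_add]
  linear_combination (-(m + 1) * s ^ m * (1 - s) ^ m) * hfactor

theorem continuousOn_symmetricHardyProbability (hn : n ≠ 0) :
    ContinuousOn (symmetricHardyProbability n) (Ioo 0 1) := fun _ hs =>
  (hasDerivAt_symmetricHardyProbability
    (pow_lt_one₀ hs.1.le hs.2 hn).ne).continuousAt.continuousWithinAt

variable {t : ℝ}

theorem ne_zero_of_sum_Icc_one_pow_eq_one (htsum : ∑ k ∈ Finset.Icc 1 n, t ^ k = 1) : n ≠ 0 := by
  rintro rfl
  simp at htsum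

theorem strictMonoOn_symmetricHardyProbability (ht : t < 1)
    (htsum : ∑ k ∈ Finset.Icc 1 n, t ^ k = 1) :
    StrictMonoOn (symmetricHardyProbability n) (Ioc 0 t) := by
  have hn := ne_zero_of_sum_Icc_one_pow_eq_one htsum
  refine strictMonoOn_of_deriv_pos (convex_Ioc 0 t)
    ((continuousOn_symmetricHardyProbability hn).mono (Ioc_subset_Ioo_right ht)) fun s hs => ?_
  rw [interior_Ioc] at hs
  obtain ⟨s_pos, s_lt_t⟩ := hs
  have s_lt_one : s < 1 := s_lt_t.trans ht
  have pow_lt_one : s ^ n < 1 := pow_lt_one₀ s_pos.le s_lt_one hn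
  have sum_lt_one : ∑ k ∈ Finset.Icc 1 n, s ^ k < 1 :=
    (strictMonoOn_sum_Icc_one_pow hn s_pos.le (s_pos.trans s_lt_t).le s_lt_t).trans_eq htsum
  rw [(hasDerivAt_symmetricHardyProbability pow_lt_one.ne).deriv]
  have := sub_pos.2 s_lt_one
  have := sub_pos.2 pow_lt_one
  have := sub_pos.2 sum_lt_one
  positivity

theorem strictAntiOn_symmetricHardyProbability (ht : 0 < t)
    (htsum : ∑ k ∈ Finset.Icc 1 n, t ^ k = 1) :
    StrictAntiOn (symmetricHardyProbability n) (Ico t 1) := by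
  have hn := ne_zero_of_sum_Icc_one_pow_eq_one htsum
  refine strictAntiOn_of_deriv_neg (convex_Ico t 1)
    ((continuousOn_symmetricHardyProbability hn).mono (Ico_subset_Ioo_left ht)) fun s hs => ?_
  rw [interior_Ico] at hs
  obtain ⟨t_lt_s, s_lt_one⟩ := hs
  have s_pos : 0 < s := ht.trans t_lt_s
  have pow_lt_one : s ^ n < 1 := pow_lt_one₀ s_pos.le s_lt_one hn
  have one_lt_sum : 1 < ∑ k ∈ Finset.Icc 1 n, s ^ k :=
    htsum.symm.trans_lt (strictMonoOn_sum_Icc_one_pow hn ht.le s_pos.le t_lt_s)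
  rw [(hasDerivAt_symmetricHardyProbability pow_lt_one.ne).deriv]
  have := sub_pos.2 s_lt_one
  have := sub_pos.2 pow_lt_one
  exact div_neg_of_neg_of_pos (mul_neg_of_pos_of_neg (by positivity) (sub_neg.2 one_lt_sum))
    (by positivity)

theorem symmetricHardyProbability_lt_of_ne (ht : t ∈ Ioo (0 : ℝ) 1)
    (htsum : ∑ k ∈ Finset.Icc 1 n, t ^ k = 1) {s : ℝ} (hs : s ∈ Ioo (0 : ℝ) 1) (hst : s ≠ t) :
    symmetricHardyProbability n s < symmetricHardyProbability n t := by
  rcases hst.lt_or_gt with s_lt_t | t_lt_s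
  · exact strictMonoOn_symmetricHardyProbability ht.2 htsum ⟨hs.1, s_lt_t.le⟩ ⟨ht.1, le_rfl⟩
      s_lt_t
  · exact strictAntiOn_symmetricHardyProbability ht.1 htsum ⟨le_rfl, ht.2⟩ ⟨t_lt_s.le, hs.2⟩
      t_lt_s

end Diagonal

/-- **The maximal success probability of the generalized n-partite Hardy
argument.** Let `n ≥ 2` and let `t` be the unique number in `(0,1)` with
`∑_{k=1}^n t^k = 1`.  For all local parameters `t₁, …, tₙ ∈ (0,1)`,
`(∏ᵢ tᵢ(1−tᵢ)) / (1 − ∏ᵢ tᵢ) ≤ tⁿ(1−t)ⁿ/(1−tⁿ)`, with equality iff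
`tᵢ = t` for every `i`.  Hence `p_max = tⁿ(1−t)ⁿ/(1−tⁿ)`, attained exactly
when all local measurement parameters `|αᵢ|²` equal `t`. -/
theorem hardy_probability_maximized (n : ℕ) (hn : 2 ≤ n)
    (t : ℝ) (ht : t ∈ Set.Ioo (0 : ℝ) 1)
    (htsum : ∑ k ∈ Finset.Icc 1 n, t ^ k = 1)
    (ts : Fin n → ℝ) (hts : ∀ i, ts i ∈ Set.Ioo (0 : ℝ) 1) :
    (∏ i, ts i * (1 - ts i)) / (1 - ∏ i, ts i) ≤
        t ^ n * (1 - t) ^ n / (1 - t ^ n) ∧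
      ((∏ i, ts i * (1 - ts i)) / (1 - ∏ i, ts i) =
          t ^ n * (1 - t) ^ n / (1 - t ^ n) ↔ ∀ i, ts i = t) := by
  have : NeZero n := ⟨by lia⟩
  change hardyProbability ts ≤ symmetricHardyProbability n t ∧
    (hardyProbability ts = symmetricHardyProbability n t ↔ ∀ i, ts i = t)
  have symmetrize : hardyProbability ts ≤ symmetricHardyProbability n (geomMean ts) := by
    simpa only [Fintype.card_fin] using hardyProbability_le_symmetric_geomMean hts
  have diagonal_lt (hne : geomMean ts ≠ t) :
      symmetricHardyProbability n (geomMean ts) < symmetricHardyProbability n t :=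
    symmetricHardyProbability_lt_of_ne ht htsum (geomMean_mem_Ioo hts) hne
  have diagonal_le : symmetricHardyProbability n (geomMean ts) ≤ symmetricHardyProbability n t :=
    (eq_or_ne (geomMean ts) t).elim (fun h => (congrArg _ h).le) fun hne => (diagonal_lt hne).le
  refine ⟨symmetrize.trans diagonal_le, fun h i => ?_, fun h => ?_⟩
  · have geomMean_eq : geomMean ts = t :=
      by_contra fun hne => (symmetrize.trans_lt (diagonal_lt hne)).ne h
    rw [← geomMean_eq] at h ⊢
    exact eq_geomMean_of_hardyProbability_eq hts (by rwa [Fintype.card_fin]) i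
  · rw [funext h, hardyProbability_const, Fintype.card_fin]
end
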